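/- arXiv:2602.03653 — 5 statements merged into one kernel-verified Lean document; each statement's English description precedes it below -/
import Mathlib

section
/- A bounded double complex of finite-dimensional complex vector spaces satisfies the ∂∂̄-lemma if and only if Δ_k := Σ_{p+q=k} (h_BC^{p,q} + h_A^{p,q}) − 2 b_k equals 0 for every k ∈ ℤ. -/
open Submodule

/-- A double complex of complex vector spaces, presented as a bigraded direct-sum
decomposition `K p q` of an ambient space `V`, together with anticommuting
differentials `d1 = ∂` (of bidegree `(1,0)`) and `d2 = ∂̄` (of bidegree `(0,1)`). -/
structure DoubleComplex (V : Type*) [AddCommGroup V] [Module ℂ V] where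
  K : ℤ → ℤ → Submodule ℂ V
  isInternal : DirectSum.IsInternal fun pq : ℤ × ℤ => K pq.1 pq.2
  d1 : V →ₗ[ℂ] V
  d2 : V →ₗ[ℂ] V
  d1_mem : ∀ p q : ℤ, ∀ x ∈ K p q, d1 x ∈ K (p + 1) q
  d2_mem : ∀ p q : ℤ, ∀ x ∈ K p q, d2 x ∈ K p (q + 1)
  d1_d1 : d1 ∘ₗ d1 = 0
  d2_d2 : d2 ∘ₗ d2 = 0
  anticomm : d1 ∘ₗ d2 + d2 ∘ₗ d1 = 0

/-- The dimension (as a natural number) of the quotient of a submodule `M` of `V`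
by (the trace on `M` of) a submodule `N`. -/
noncomputable def qdim {V : Type*} [AddCommGroup V] [Module ℂ V]
    (M N : Submodule ℂ V) : ℕ :=
  Module.finrank ℂ (↥M ⧸ N.comap M.subtype)

/-- The linear map between quotients `M₁/N₁ → M₂/N₂` induced by the identity,
for `M₁ ≤ M₂` and `N₁ ≤ N₂`. -/
def quotMap {V : Type*} [AddCommGroup V] [Module ℂ V] {M₁ N₁ M₂ N₂ : Submodule ℂ V}
    (hM : M₁ ≤ M₂) (hN : N₁ ≤ N₂) :
    (↥M₁ ⧸ N₁.comap M₁.subtype) →ₗ[ℂ] (↥M₂ ⧸ N₂.comap M₂.subtype) :=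
  Submodule.mapQ _ _ (Submodule.inclusion hM) fun _ hx => hN hx

namespace DoubleComplex

variable {V : Type*} [AddCommGroup V] [Module ℂ V] (D : DoubleComplex V)

/-- A double complex is bounded if only finitely many components are non-zero. -/
def Bounded : Prop := Set.Finite {pq : ℤ × ℤ | D.K pq.1 pq.2 ≠ ⊥}

lemma d1_d1_apply (x : V) : D.d1 (D.d1 x) = 0 := by
  simpa using LinearMap.ext_iff.mp D.d1_d1 x

lemma d2_d2_apply (x : V) : D.d2 (D.d2 x) = 0 := by
  simpa using LinearMap.ext_iff.mp D.d2_d2 x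

lemma anticomm_apply (x : V) : D.d1 (D.d2 x) + D.d2 (D.d1 x) = 0 := by
  simpa using LinearMap.ext_iff.mp D.anticomm x

/-- Numerator `ker ∂̄ ∩ K^{p,q}` of the Dolbeault cohomology. -/
def dolN (p q : ℤ) : Submodule ℂ V := LinearMap.ker D.d2 ⊓ D.K p q
/-- Denominator `∂̄ K^{p,q-1}` of the Dolbeault cohomology. -/
def dolD (p q : ℤ) : Submodule ℂ V := (D.K p (q - 1)).map D.d2
/-- Numerator `ker ∂ ∩ K^{p,q}` of the conjugate Dolbeault cohomology. -/
def conjN (p q : ℤ) : Submodule ℂ V := LinearMap.ker D.d1 ⊓ D.K p q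
/-- Denominator `∂ K^{p-1,q}` of the conjugate Dolbeault cohomology. -/
def conjD (p q : ℤ) : Submodule ℂ V := (D.K (p - 1) q).map D.d1
/-- Numerator `ker ∂ ∩ ker ∂̄ ∩ K^{p,q}` of the Bott-Chern cohomology. -/
def bcN (p q : ℤ) : Submodule ℂ V := LinearMap.ker D.d1 ⊓ LinearMap.ker D.d2 ⊓ D.K p q
/-- Denominator `∂∂̄ K^{p-1,q-1}` of the Bott-Chern cohomology. -/
def bcD (p q : ℤ) : Submodule ℂ V := (D.K (p - 1) (q - 1)).map (D.d1 ∘ₗ D.d2)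
/-- Numerator `ker ∂∂̄ ∩ K^{p,q}` of the Aeppli cohomology. -/
def aeN (p q : ℤ) : Submodule ℂ V := LinearMap.ker (D.d1 ∘ₗ D.d2) ⊓ D.K p q
/-- Denominator `∂ K^{p-1,q} + ∂̄ K^{p,q-1}` of the Aeppli cohomology. -/
def aeD (p q : ℤ) : Submodule ℂ V := (D.K (p - 1) q).map D.d1 ⊔ (D.K p (q - 1)).map D.d2

/-- The degree-`k` part `Tot^k = ⊕_{p+q=k} K^{p,q}` of the total complex. -/
def Tot (k : ℤ) : Submodule ℂ V := ⨆ p : ℤ, D.K p (k - p)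
/-- The total differential `d = ∂ + ∂̄`. -/
def dT : V →ₗ[ℂ] V := D.d1 + D.d2
/-- Numerator `ker d ∩ Tot^k` of the de Rham cohomology of the total complex. -/
def dRN (k : ℤ) : Submodule ℂ V := LinearMap.ker D.dT ⊓ D.Tot k
/-- Denominator `d (Tot^{k-1})` of the de Rham cohomology of the total complex. -/
def dRD (k : ℤ) : Submodule ℂ V := (D.Tot (k - 1)).map D.dT

/-- Hodge number `h_∂̄^{p,q}`. -/
noncomputable def hDol (p q : ℤ) : ℕ := qdim (D.dolN p q) (D.dolD p q)
/-- Conjugate Hodge number `h_∂^{p,q}`. -/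
noncomputable def hConj (p q : ℤ) : ℕ := qdim (D.conjN p q) (D.conjD p q)
/-- Bott-Chern number `h_BC^{p,q}`. -/
noncomputable def hBC (p q : ℤ) : ℕ := qdim (D.bcN p q) (D.bcD p q)
/-- Aeppli number `h_A^{p,q}`. -/
noncomputable def hAe (p q : ℤ) : ℕ := qdim (D.aeN p q) (D.aeD p q)
/-- Betti number `b_k` of the total complex. -/
noncomputable def b (k : ℤ) : ℕ := qdim (D.dRN k) (D.dRD k)

/-- The `∂∂̄`-lemma property:
`ker ∂ ∩ ker ∂̄ ∩ (im ∂ + im ∂̄) ∩ K^{p,q} = ∂∂̄ K^{p-1,q-1}` for every `(p,q)`. -/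
def SatisfiesDdbarLemma : Prop :=
  ∀ p q : ℤ,
    LinearMap.ker D.d1 ⊓ LinearMap.ker D.d2 ⊓ (D.conjD p q ⊔ D.dolD p q) ⊓ D.K p q =
      D.bcD p q

end DoubleComplex

/-!
The total complex carries a second differential `e = ∂ - ∂̄`, conjugate to `d = ∂ + ∂̄` under the
involution acting as `(-1)^q` on `K^{p,q}`, so `d` and `e` have the same Betti numbers. Since
`ker ∂ ∩ ker ∂̄ = ker d ∩ ker e`, `im ∂ + im ∂̄ = im d + im e` and `e d = 2 ∂∂̄ = - d e`, the
modular law for dimensions yields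
`Δ_k = dim ((im d ∩ im e) / im ∂∂̄)^k + dim (ker ∂∂̄ / (ker d + ker e))^k`.
Hence `Δ = 0` means `im d ∩ im e = im ∂∂̄` and `ker ∂∂̄ = ker d + ker e`, and looking at
homogeneous components shows that these two equalities together are equivalent to the
`∂∂̄`-lemma.
-/

section LinearAlgebra

variable {K V W ι : Type*} [Field K] [AddCommGroup V] [Module K V] [AddCommGroup W] [Module K W]

lemma ker_inf_ker_le_ker_add (f g : V →ₗ[K] W) :
    LinearMap.ker f ⊓ LinearMap.ker g ≤ LinearMap.ker (f + g) := by
  rintro x ⟨hf, hg⟩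
  simp_all

lemma ker_inf_ker_le_ker_sub (f g : V →ₗ[K] W) :
    LinearMap.ker f ⊓ LinearMap.ker g ≤ LinearMap.ker (f - g) := by
  simpa only [sub_eq_add_neg, LinearMap.ker_neg] using ker_inf_ker_le_ker_add f (-g)

lemma map_sub_le (f g : V →ₗ[K] W) (T : Submodule K V) :
    T.map (f - g) ≤ T.map f ⊔ T.map g := by
  simpa only [sub_eq_add_neg, Submodule.map_neg] using Submodule.map_add_le T f (-g)

lemma ker_add_inf_ker_sub [NeZero (2 : K)] (f g : V →ₗ[K] W) :
    LinearMap.ker (f + g) ⊓ LinearMap.ker (f - g) = LinearMap.ker f ⊓ LinearMap.ker g := by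
  refine le_antisymm (le_inf ?_ ?_)
    (le_inf (ker_inf_ker_le_ker_add f g) (ker_inf_ker_le_ker_sub f g))
  · rw [← LinearMap.ker_smul f (2 : K) two_ne_zero,
      show (2 : K) • f = (f + g) + (f - g) by module]
    exact ker_inf_ker_le_ker_add _ _
  · rw [← LinearMap.ker_smul g (2 : K) two_ne_zero,
      show (2 : K) • g = (f + g) - (f - g) by module]
    exact ker_inf_ker_le_ker_sub _ _

lemma map_add_sup_map_sub [NeZero (2 : K)] (f g : V →ₗ[K] W) (T : Submodule K V) :
    T.map (f + g) ⊔ T.map (f - g) = T.map f ⊔ T.map g := by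
  refine le_antisymm (sup_le (Submodule.map_add_le T f g) (map_sub_le f g T)) (sup_le ?_ ?_)
  · rw [← Submodule.map_smul f T (2 : K) two_ne_zero,
      show (2 : K) • f = (f + g) + (f - g) by module]
    exact Submodule.map_add_le _ _ _
  · rw [← Submodule.map_smul g T (2 : K) two_ne_zero,
      show (2 : K) • g = (f + g) - (f - g) by module]
    exact map_sub_le _ _ _

lemma finrank_finset_sup [FiniteDimensional K V] {N : ι → Submodule K V} (hN : iSupIndep N)
    (s : Finset ι) : Module.finrank K ↥(s.sup N) = ∑ i ∈ s, Module.finrank K (N i) := by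
  classical
  induction s using Finset.induction_on with
  | empty => simp
  | insert a s ha ih =>
    have hdisj : Disjoint (N a) (s.sup N) :=
      hN.supIndep' (insert a s) (Finset.subset_insert a s) (Finset.mem_insert_self a s) ha
    have hmod := Submodule.finrank_sup_add_finrank_inf_eq (N a) (s.sup N)
    rw [hdisj.eq_bot, finrank_bot, add_zero] at hmod
    rw [Finset.sup_insert, Finset.sum_insert ha, ← ih, hmod]

lemma finite_support_finrank [FiniteDimensional K V] {N : ι → Submodule K V} (hN : iSupIndep N) :
    (Function.support fun i => Module.finrank K (N i)).Finite := by
  refine (WellFoundedGT.finite_ne_bot_of_iSupIndep hN).subset fun i hi hbot => hi ?_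
  exact Submodule.finrank_eq_zero.2 hbot

lemma finrank_iSup [FiniteDimensional K V] {N : ι → Submodule K V} (hN : iSupIndep N) :
    Module.finrank K ↥(⨆ i, N i) = ∑ᶠ i, Module.finrank K (N i) := by
  have hfin := finite_support_finrank hN
  have hsup : ⨆ i, N i = hfin.toFinset.sup N := by
    refine le_antisymm (iSup_le fun i => ?_) (Finset.sup_le fun i _ => le_iSup N i)
    by_cases hi : i ∈ hfin.toFinset
    · exact Finset.le_sup hi
    · have hbot : N i = ⊥ := by simpa using hi
      exact hbot.trans_le bot_le
  rw [hsup, finrank_finset_sup hN, finsum_eq_sum _ hfin]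

end LinearAlgebra

section Qdim

variable {V ι : Type*} [AddCommGroup V] [Module ℂ V] [FiniteDimensional ℂ V]

lemma qdim_add_finrank {M N : Submodule ℂ V} (h : N ≤ M) :
    qdim M N + Module.finrank ℂ N = Module.finrank ℂ M := by
  rw [← (Submodule.comapSubtypeEquivOfLe h).finrank_eq]
  exact Submodule.finrank_quotient_add_finrank _

lemma qdim_eq_zero_iff {M N : Submodule ℂ V} : qdim M N = 0 ↔ M ≤ N := by
  rw [qdim, Module.finrank_zero_iff, Submodule.Quotient.subsingleton_iff,
    Submodule.comap_subtype_eq_top]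

lemma qdim_map_equiv (e : V ≃ₗ[ℂ] V) {M N : Submodule ℂ V} (h : N ≤ M) :
    qdim (M.map e.toLinearMap) (N.map e.toLinearMap) = qdim M N := by
  have hmap := qdim_add_finrank (Submodule.map_mono (f := e.toLinearMap) h)
  rw [LinearEquiv.finrank_map_eq, LinearEquiv.finrank_map_eq, ← qdim_add_finrank h] at hmap
  exact Nat.add_right_cancel hmap

lemma finite_support_qdim {M : ι → Submodule ℂ V} (hM : iSupIndep M) (N : ι → Submodule ℂ V) :
    (Function.support fun i => qdim (M i) (N i)).Finite := by
  refine (WellFoundedGT.finite_ne_bot_of_iSupIndep hM).subset fun i hi hbot => hi ?_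
  exact qdim_eq_zero_iff.2 (hbot.trans_le bot_le)

lemma finsum_qdim {M N : ι → Submodule ℂ V} (hM : iSupIndep M) (hNM : ∀ i, N i ≤ M i) :
    ∑ᶠ i, qdim (M i) (N i) = qdim (⨆ i, M i) (⨆ i, N i) := by
  have hN : iSupIndep N := hM.mono hNM
  have hsum := finsum_add_distrib (finite_support_qdim hM N) (finite_support_finrank hN)
  simp only [qdim_add_finrank (hNM _)] at hsum
  rw [← finrank_iSup hM, ← finrank_iSup hN, ← qdim_add_finrank (iSup_mono hNM)] at hsum
  exact (Nat.add_right_cancel hsum).symm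

/-- Two applications of `dim (X + Y) + dim (X ∩ Y) = dim X + dim Y`, to `(Z, Z')` and `(B, B')`. -/
lemma qdim_inf_add_qdim_sup {A Z Z' B B' R : Submodule ℂ V} (hA : Z ⊔ Z' ≤ A) (hB : B ≤ Z)
    (hB' : B' ≤ Z') (hR : R ≤ B ⊓ B') :
    qdim (Z ⊓ Z') R + qdim A (B ⊔ B') =
      qdim Z B + qdim Z' B' + (qdim (B ⊓ B') R + qdim A (Z ⊔ Z')) := by
  have hZ_mod := Submodule.finrank_sup_add_finrank_inf_eq Z Z'
  have hB_mod := Submodule.finrank_sup_add_finrank_inf_eq B B'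
  have hZR := qdim_add_finrank (hR.trans (inf_le_inf hB hB'))
  have hAB := qdim_add_finrank ((sup_le_sup hB hB').trans hA)
  have hZB := qdim_add_finrank hB
  have hZB' := qdim_add_finrank hB'
  have hBR := qdim_add_finrank hR
  have hAZ := qdim_add_finrank hA
  omega

end Qdim

namespace DoubleComplex

variable {V : Type*} [AddCommGroup V] [Module ℂ V] (D : DoubleComplex V)

section Grading

lemma eq_top_of_K_le {N : Submodule ℂ V} (h : ∀ p q, D.K p q ≤ N) : N = ⊤ :=
  top_le_iff.1 (D.isInternal.submodule_iSup_eq_top.ge.trans (iSup_le fun i => h i.1 i.2))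

lemma hom_ext {W : Type*} [AddCommGroup W] [Module ℂ W] {f g : V →ₗ[ℂ] W}
    (h : ∀ p q, ∀ x ∈ D.K p q, f x = g x) : f = g :=
  LinearMap.eqLocus_eq_top.1 (D.eq_top_of_K_le h)

/-- The diagonal operator multiplying each component `K p q` by the scalar `c p q`. Both the
projections onto the components and the sign involution are of this form. -/
noncomputable def diag (c : ℤ → ℤ → ℂ) : V →ₗ[ℂ] V :=
  (DirectSum.toModule ℂ (ℤ × ℤ) V fun i => c i.1 i.2 • (D.K i.1 i.2).subtype) ∘ₗ
    (LinearEquiv.ofBijective (DirectSum.coeLinearMap fun i : ℤ × ℤ => D.K i.1 i.2)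
      D.isInternal).symm.toLinearMap

lemma diag_apply (c : ℤ → ℤ → ℂ) {p q : ℤ} {x : V} (hx : x ∈ D.K p q) :
    D.diag c x = c p q • x := by
  have hsymm : (LinearEquiv.ofBijective (DirectSum.coeLinearMap fun i : ℤ × ℤ => D.K i.1 i.2)
      D.isInternal).symm x =
        DirectSum.lof ℂ (ℤ × ℤ) (fun i => D.K i.1 i.2) (p, q) ⟨x, hx⟩ := by
    rw [LinearEquiv.symm_apply_eq]
    exact (DirectSum.coeLinearMap_lof (fun i : ℤ × ℤ => D.K i.1 i.2) (p, q) ⟨x, hx⟩).symm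
  rw [diag, LinearMap.comp_apply, LinearEquiv.coe_coe, hsymm, DirectSum.toModule_lof]
  rfl

lemma d1_diag {c c' : ℤ → ℤ → ℂ} (h : ∀ p q, c' (p + 1) q = c p q) (x : V) :
    D.d1 (D.diag c x) = D.diag c' (D.d1 x) := by
  suffices D.d1 ∘ₗ D.diag c = D.diag c' ∘ₗ D.d1 from LinearMap.congr_fun this x
  refine D.hom_ext fun p q y hy => ?_
  simp only [LinearMap.comp_apply, D.diag_apply _ hy, D.diag_apply _ (D.d1_mem p q y hy), map_smul,
    h]

lemma d2_diag {c c' : ℤ → ℤ → ℂ} (h : ∀ p q, c' p (q + 1) = c p q) (x : V) :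
    D.d2 (D.diag c x) = D.diag c' (D.d2 x) := by
  suffices D.d2 ∘ₗ D.diag c = D.diag c' ∘ₗ D.d2 from LinearMap.congr_fun this x
  refine D.hom_ext fun p q y hy => ?_
  simp only [LinearMap.comp_apply, D.diag_apply _ hy, D.diag_apply _ (D.d2_mem p q y hy), map_smul,
    h]

/-- The projection of the ambient space onto the component `K p q`. -/
noncomputable def pr (p q : ℤ) : V →ₗ[ℂ] V :=
  D.diag fun a b => if a = p ∧ b = q then 1 else 0

lemma pr_of_mem {p q : ℤ} {x : V} (hx : x ∈ D.K p q) : D.pr p q x = x := by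
  simp [pr, D.diag_apply _ hx]

lemma pr_of_mem_of_ne {p q a b : ℤ} {x : V} (hx : x ∈ D.K a b) (h : ¬(a = p ∧ b = q)) :
    D.pr p q x = 0 := by
  simp [pr, D.diag_apply _ hx, h]

lemma pr_mem (p q : ℤ) (x : V) : D.pr p q x ∈ D.K p q := by
  have htop : (D.K p q).comap (D.pr p q) = ⊤ := D.eq_top_of_K_le fun a b y hy => by
    rw [Submodule.mem_comap]
    by_cases h : a = p ∧ b = q
    · obtain ⟨rfl, rfl⟩ := h
      rwa [D.pr_of_mem hy]
    · rw [D.pr_of_mem_of_ne hy h]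
      exact zero_mem _
  exact Submodule.eq_top_iff'.1 htop x

lemma d1_pr (p q : ℤ) (x : V) : D.d1 (D.pr p q x) = D.pr (p + 1) q (D.d1 x) :=
  D.d1_diag (fun a b => by simp only [add_left_inj]) x

lemma d2_pr (p q : ℤ) (x : V) : D.d2 (D.pr p q x) = D.pr p (q + 1) (D.d2 x) :=
  D.d2_diag (fun a b => by simp only [add_left_inj]) x

lemma d1_mem_K {p q : ℤ} {x : V} (hx : x ∈ D.K (p - 1) q) : D.d1 x ∈ D.K p q := by
  simpa only [sub_add_cancel] using D.d1_mem (p - 1) q x hx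

lemma d2_mem_K {p q : ℤ} {x : V} (hx : x ∈ D.K p (q - 1)) : D.d2 x ∈ D.K p q := by
  simpa only [sub_add_cancel] using D.d2_mem p (q - 1) x hx

lemma d2_d1_apply (x : V) : D.d2 (D.d1 x) = -D.d1 (D.d2 x) :=
  eq_neg_of_add_eq_zero_right (D.anticomm_apply x)

end Grading

section Tot

lemma K_le_Tot {p q k : ℤ} (h : p + q = k) : D.K p q ≤ D.Tot k := by
  obtain rfl : q = k - p := by omega
  exact le_iSup (fun p => D.K p (k - p)) p

lemma iSup_K_eq_Tot {k : ℤ} (e : ℤ ≃ ℤ) {f : ℤ → ℤ} (h : ∀ p, e p + f p = k) :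
    ⨆ p, D.K (e p) (f p) = D.Tot k := by
  rw [Tot, ← e.iSup_comp (g := fun p => D.K p (k - p))]
  exact iSup_congr fun p => by rw [eq_sub_of_add_eq' (h p)]

lemma iSupIndep_K (k : ℤ) : iSupIndep fun p => D.K p (k - p) :=
  D.isInternal.submodule_iSupIndep.comp (f := fun p : ℤ => ((p, k - p) : ℤ × ℤ))
    fun _ _ h => congrArg Prod.fst h

lemma d1_mem_Tot {j k : ℤ} (h : j + 1 = k) {x : V} (hx : x ∈ D.Tot j) : D.d1 x ∈ D.Tot k := by
  have hle : D.Tot j ≤ (D.Tot k).comap D.d1 :=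
    iSup_le fun p y hy => D.K_le_Tot (by omega) (D.d1_mem _ _ y hy)
  exact hle hx

lemma d2_mem_Tot {j k : ℤ} (h : j + 1 = k) {x : V} (hx : x ∈ D.Tot j) : D.d2 x ∈ D.Tot k := by
  have hle : D.Tot j ≤ (D.Tot k).comap D.d2 :=
    iSup_le fun p y hy => D.K_le_Tot (by omega) (D.d2_mem _ _ y hy)
  exact hle hx

lemma diag_mem_Tot (c : ℤ → ℤ → ℂ) {k : ℤ} {x : V} (hx : x ∈ D.Tot k) :
    D.diag c x ∈ D.Tot k := by
  have hle : D.Tot k ≤ (D.Tot k).comap (D.diag c) := iSup_le fun p y hy => by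
    rw [Submodule.mem_comap, D.diag_apply c hy]
    exact D.K_le_Tot (by omega) (Submodule.smul_mem _ _ hy)
  exact hle hx

lemma exists_sum_pr_eq {k : ℤ} {x : V} (hx : x ∈ D.Tot k) :
    ∃ s : Finset ℤ, ∑ p ∈ s, D.pr p (k - p) x = x := by
  obtain ⟨s, hs⟩ := Submodule.mem_iSup_iff_exists_finset.1 hx
  have hle : ⨆ p ∈ s, D.K p (k - p) ≤
      LinearMap.eqLocus (∑ p ∈ s, D.pr p (k - p)) LinearMap.id :=
    iSup₂_le fun p hp y hy => by
      rw [LinearMap.mem_eqLocus, LinearMap.sum_apply, LinearMap.id_apply,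
        Finset.sum_eq_single_of_mem p hp, D.pr_of_mem hy]
      exact fun a _ ha => D.pr_of_mem_of_ne hy fun h => ha h.1.symm
  exact ⟨s, by simpa using hle hs⟩

lemma mem_iSup_iff {k : ℤ} {S : ℤ → Submodule ℂ V} (hS : ∀ p, S p ≤ D.K p (k - p)) {x : V} :
    x ∈ ⨆ p, S p ↔ x ∈ D.Tot k ∧ ∀ p, D.pr p (k - p) x ∈ S p := by
  constructor
  · refine fun hx => ⟨iSup_mono hS hx, fun p => ?_⟩
    have hle : ⨆ a, S a ≤ (S p).comap (D.pr p (k - p)) := iSup_le fun a y hy => by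
      rw [Submodule.mem_comap]
      by_cases h : a = p
      · subst h
        rwa [D.pr_of_mem (hS a hy)]
      · rw [D.pr_of_mem_of_ne (hS a hy) fun h' => h h'.1]
        exact zero_mem _
    exact hle hx
  · rintro ⟨hx, hpr⟩
    obtain ⟨s, hs⟩ := D.exists_sum_pr_eq hx
    rw [← hs]
    exact Submodule.sum_mem _ fun p _ => Submodule.mem_iSup_of_mem p (hpr p)

lemma iSup_inf_K (k : ℤ) {N : Submodule ℂ V} (hN : ∀ x ∈ N, ∀ p q, D.pr p q x ∈ N) :
    ⨆ p, N ⊓ D.K p (k - p) = N ⊓ D.Tot k := by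
  refine le_antisymm (iSup_le fun p => inf_le_inf_left N (D.K_le_Tot (by omega))) ?_
  rintro x ⟨hxN, hx⟩
  exact (D.mem_iSup_iff fun p => inf_le_right).2 ⟨hx, fun p => ⟨hN x hxN p _, D.pr_mem p _ x⟩⟩

end Tot

section ConjugateDifferential

/-- The second total differential `e = ∂ - ∂̄`, conjugate to `d = ∂ + ∂̄` under `sign`. -/
def dTConj : V →ₗ[ℂ] V := D.d1 - D.d2

/-- Numerator `ker e ∩ Tot^k` of the cohomology of the total complex for `e = ∂ - ∂̄`. -/
def dRNConj (k : ℤ) : Submodule ℂ V := LinearMap.ker D.dTConj ⊓ D.Tot k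

/-- Denominator `e (Tot^{k-1})` of the cohomology of the total complex for `e = ∂ - ∂̄`. -/
def dRDConj (k : ℤ) : Submodule ℂ V := (D.Tot (k - 1)).map D.dTConj

lemma dT_apply (x : V) : D.dT x = D.d1 x + D.d2 x := rfl

lemma dTConj_apply (x : V) : D.dTConj x = D.d1 x - D.d2 x := rfl

lemma dT_dT (x : V) : D.dT (D.dT x) = 0 := by
  simp only [dT_apply, map_add, d1_d1_apply, d2_d2_apply, d2_d1_apply]
  module

lemma dTConj_dTConj (x : V) : D.dTConj (D.dTConj x) = 0 := by
  simp only [dTConj_apply, map_sub, d1_d1_apply, d2_d2_apply, d2_d1_apply]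
  module

lemma dTConj_dT (x : V) : D.dTConj (D.dT x) = (2 : ℂ) • D.d1 (D.d2 x) := by
  simp only [dT_apply, dTConj_apply, map_add, d1_d1_apply, d2_d2_apply, d2_d1_apply]
  module

lemma dT_dTConj (x : V) : D.dT (D.dTConj x) = (-2 : ℂ) • D.d1 (D.d2 x) := by
  simp only [dT_apply, dTConj_apply, map_sub, d1_d1_apply, d2_d2_apply, d2_d1_apply]
  module

lemma dT_mem_Tot {j k : ℤ} (h : j + 1 = k) {x : V} (hx : x ∈ D.Tot j) : D.dT x ∈ D.Tot k :=
  add_mem (D.d1_mem_Tot h hx) (D.d2_mem_Tot h hx)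

lemma dTConj_mem_Tot {j k : ℤ} (h : j + 1 = k) {x : V} (hx : x ∈ D.Tot j) :
    D.dTConj x ∈ D.Tot k :=
  sub_mem (D.d1_mem_Tot h hx) (D.d2_mem_Tot h hx)

lemma dRD_le_dRN (k : ℤ) : D.dRD k ≤ D.dRN k := by
  rintro _ ⟨x, hx, rfl⟩
  exact ⟨D.dT_dT x, D.dT_mem_Tot (by omega) hx⟩

lemma dRDConj_le_dRNConj (k : ℤ) : D.dRDConj k ≤ D.dRNConj k := by
  rintro _ ⟨x, hx, rfl⟩
  exact ⟨D.dTConj_dTConj x, D.dTConj_mem_Tot (by omega) hx⟩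

/-- The sign involution, acting on `K p q` as `(-1) ^ q`. -/
noncomputable def sign : V ≃ₗ[ℂ] V :=
  LinearEquiv.ofInvolutive (D.diag fun _ q => (-1) ^ q) fun x => by
    suffices (D.diag fun _ q => (-1) ^ q) ∘ₗ (D.diag fun _ q => (-1) ^ q) = LinearMap.id from
      LinearMap.congr_fun this x
    refine D.hom_ext fun p q y hy => ?_
    rw [LinearMap.comp_apply, D.diag_apply _ hy, map_smul, D.diag_apply _ hy, smul_smul,
      ← mul_zpow, neg_one_mul, neg_neg, one_zpow, one_smul, LinearMap.id_apply]

lemma sign_apply {p q : ℤ} {x : V} (hx : x ∈ D.K p q) : D.sign x = (-1 : ℂ) ^ q • x :=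
  D.diag_apply (fun _ q => (-1) ^ q) hx

lemma dTConj_comp_sign :
    D.dTConj ∘ₗ D.sign.toLinearMap = D.sign.toLinearMap ∘ₗ D.dT := by
  refine D.hom_ext fun p q x hx => ?_
  simp only [LinearMap.comp_apply, LinearEquiv.coe_coe, dTConj_apply, dT_apply, map_add,
    D.sign_apply hx, D.sign_apply (D.d1_mem p q x hx), D.sign_apply (D.d2_mem p q x hx), map_smul,
    zpow_add_one₀ (neg_ne_zero.2 (one_ne_zero (α := ℂ)))]
  module

lemma map_sign_Tot (k : ℤ) : (D.Tot k).map D.sign.toLinearMap = D.Tot k := by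
  have hmem {x : V} (hx : x ∈ D.Tot k) : D.sign x ∈ D.Tot k :=
    D.diag_mem_Tot (fun _ q => (-1) ^ q) hx
  exact le_antisymm (Submodule.map_le_iff_le_comap.2 fun x hx => hmem hx)
    fun x hx => ⟨D.sign x, hmem hx, D.sign.apply_symm_apply x⟩

lemma map_sign_dRN (k : ℤ) : (D.dRN k).map D.sign.toLinearMap = D.dRNConj k := by
  have hker : LinearMap.ker D.dT = (LinearMap.ker D.dTConj).comap D.sign.toLinearMap := by
    rw [← LinearMap.ker_comp, dTConj_comp_sign, LinearEquiv.ker_comp]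
  rw [dRN, Submodule.map_inf _ D.sign.injective, map_sign_Tot, hker,
    Submodule.map_comap_eq_of_surjective D.sign.surjective, dRNConj]

lemma map_sign_dRD (k : ℤ) : (D.dRD k).map D.sign.toLinearMap = D.dRDConj k := by
  rw [dRD, ← Submodule.map_comp, ← dTConj_comp_sign, Submodule.map_comp, map_sign_Tot, dRDConj]

lemma qdim_dRNConj_dRDConj [FiniteDimensional ℂ V] (k : ℤ) :
    qdim (D.dRNConj k) (D.dRDConj k) = D.b k := by
  rw [← map_sign_dRN, ← map_sign_dRD, qdim_map_equiv _ (D.dRD_le_dRN k), b]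

end ConjugateDifferential

section Delta

/-- The kernel of `∂∂̄` in total degree `k`. -/
def ddbarKer (k : ℤ) : Submodule ℂ V := LinearMap.ker (D.d1 ∘ₗ D.d2) ⊓ D.Tot k

/-- The image of `∂∂̄` in total degree `k`. -/
def ddbarIm (k : ℤ) : Submodule ℂ V := (D.Tot (k - 2)).map (D.d1 ∘ₗ D.d2)

lemma ddbarIm_le (k : ℤ) : D.ddbarIm k ≤ D.dRD k ⊓ D.dRDConj k := by
  rintro _ ⟨x, hx, rfl⟩
  refine ⟨⟨(-2⁻¹ : ℂ) • D.dTConj x,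
    Submodule.smul_mem _ _ (D.dTConj_mem_Tot (by omega) hx), ?_⟩,
    ⟨(2⁻¹ : ℂ) • D.dT x, Submodule.smul_mem _ _ (D.dT_mem_Tot (by omega) hx), ?_⟩⟩
  · rw [map_smul, dT_dTConj, LinearMap.comp_apply]
    module
  · rw [map_smul, dTConj_dT, LinearMap.comp_apply]
    module

lemma dRN_sup_dRNConj_le (k : ℤ) : D.dRN k ⊔ D.dRNConj k ≤ D.ddbarKer k := by
  refine sup_le (inf_le_inf_right _ fun x hx => ?_) (inf_le_inf_right _ fun x hx => ?_)
  · have h := D.dTConj_dT x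
    rw [LinearMap.mem_ker.1 hx, map_zero] at h
    simpa using h.symm
  · have h := D.dT_dTConj x
    rw [LinearMap.mem_ker.1 hx, map_zero] at h
    simpa using h.symm

lemma bcD_le_bcN (p q : ℤ) : D.bcD p q ≤ D.bcN p q := by
  rintro _ ⟨x, hx, rfl⟩
  refine ⟨⟨?_, ?_⟩, D.d1_mem_K (D.d2_mem_K hx)⟩
  · simp [d1_d1_apply]
  · simp [d2_d1_apply, d2_d2_apply]

lemma aeD_le_aeN (p q : ℤ) : D.aeD p q ≤ D.aeN p q := by
  refine sup_le ?_ ?_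
  · rintro _ ⟨x, hx, rfl⟩
    exact ⟨by simp [d2_d1_apply, d1_d1_apply], D.d1_mem_K hx⟩
  · rintro _ ⟨x, hx, rfl⟩
    exact ⟨by simp [d2_d2_apply], D.d2_mem_K hx⟩

lemma iSup_bcN (k : ℤ) : ⨆ p, D.bcN p (k - p) = D.dRN k ⊓ D.dRNConj k := by
  have hpr : ∀ x ∈ LinearMap.ker D.d1 ⊓ LinearMap.ker D.d2, ∀ p q,
      D.pr p q x ∈ LinearMap.ker D.d1 ⊓ LinearMap.ker D.d2 := by
    rintro x ⟨h1, h2⟩ p q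
    exact ⟨by simp_all [d1_pr], by simp_all [d2_pr]⟩
  rw [dRN, dRNConj, ← inf_inf_distrib_right, dT, dTConj, ker_add_inf_ker_sub]
  exact D.iSup_inf_K k hpr

lemma iSup_aeN (k : ℤ) : ⨆ p, D.aeN p (k - p) = D.ddbarKer k :=
  D.iSup_inf_K k fun x hx p q => by simp_all [d1_pr, d2_pr]

lemma iSup_bcD (k : ℤ) : ⨆ p, D.bcD p (k - p) = D.ddbarIm k := by
  simp only [bcD, ← Submodule.map_iSup]
  rw [ddbarIm, ← D.iSup_K_eq_Tot (Equiv.subRight 1)]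
  · rfl
  · intro p
    rw [Equiv.subRight_apply]
    omega

lemma iSup_aeD (k : ℤ) : ⨆ p, D.aeD p (k - p) = D.dRD k ⊔ D.dRDConj k := by
  have h1 : ⨆ p, D.K (p - 1) (k - p) = D.Tot (k - 1) :=
    D.iSup_K_eq_Tot (Equiv.subRight 1) fun p => by rw [Equiv.subRight_apply]; omega
  have h2 : ⨆ p, D.K p (k - p - 1) = D.Tot (k - 1) :=
    D.iSup_K_eq_Tot (Equiv.refl ℤ) fun p => by rw [Equiv.refl_apply]; omega
  simp only [aeD, iSup_sup_eq, ← Submodule.map_iSup, h1, h2]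
  rw [dRD, dRDConj, dT, dTConj, map_add_sup_map_sub]

variable [FiniteDimensional ℂ V]

lemma finsum_hBC_add_hAe (k : ℤ) :
    ∑ᶠ p, (D.hBC p (k - p) + D.hAe p (k - p)) =
      2 * D.b k + (qdim (D.dRD k ⊓ D.dRDConj k) (D.ddbarIm k) +
        qdim (D.ddbarKer k) (D.dRN k ⊔ D.dRNConj k)) := by
  have hbc : iSupIndep fun p => D.bcN p (k - p) := (D.iSupIndep_K k).mono fun p => inf_le_right
  have hae : iSupIndep fun p => D.aeN p (k - p) := (D.iSupIndep_K k).mono fun p => inf_le_right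
  simp only [hBC, hAe]
  rw [finsum_add_distrib (finite_support_qdim hbc _) (finite_support_qdim hae _),
    finsum_qdim hbc fun p => D.bcD_le_bcN p _, finsum_qdim hae fun p => D.aeD_le_aeN p _,
    iSup_bcN, iSup_bcD, iSup_aeN, iSup_aeD,
    qdim_inf_add_qdim_sup (D.dRN_sup_dRNConj_le k) (D.dRD_le_dRN k) (D.dRDConj_le_dRNConj k)
      (D.ddbarIm_le k), qdim_dRNConj_dRDConj, ← b, two_mul]

lemma delta_eq_zero_iff (k : ℤ) :
    (∑ᶠ p : ℤ, ((D.hBC p (k - p) : ℤ) + (D.hAe p (k - p) : ℤ))) - 2 * (D.b k : ℤ) = 0 ↔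
      D.dRD k ⊓ D.dRDConj k ≤ D.ddbarIm k ∧ D.ddbarKer k ≤ D.dRN k ⊔ D.dRNConj k := by
  have hcast : ∑ᶠ p : ℤ, ((D.hBC p (k - p) : ℤ) + (D.hAe p (k - p) : ℤ)) =
      ((∑ᶠ p, (D.hBC p (k - p) + D.hAe p (k - p)) : ℕ) : ℤ) := by
    simpa using ((Nat.castAddMonoidHom ℤ).map_finsum_of_injective Nat.cast_injective
      fun p => D.hBC p (k - p) + D.hAe p (k - p)).symm
  rw [hcast, finsum_hBC_add_hAe, ← qdim_eq_zero_iff, ← qdim_eq_zero_iff]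
  omega

end Delta

section DdbarLemma

variable {D}

lemma SatisfiesDdbarLemma.inf_sup_le_ddbarIm (hD : D.SatisfiesDdbarLemma) (k : ℤ) :
    D.dRN k ⊓ D.dRNConj k ⊓ (D.dRD k ⊔ D.dRDConj k) ≤ D.ddbarIm k := by
  rw [← iSup_bcN, ← iSup_aeD, ← iSup_bcD]
  rintro x ⟨hbcN, haeD⟩
  obtain ⟨hx, hpr_bcN⟩ := (D.mem_iSup_iff fun p => inf_le_right).1 hbcN
  obtain ⟨-, hpr_aeD⟩ := (D.mem_iSup_iff fun p => (D.aeD_le_aeN p _).trans inf_le_right).1 haeD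
  refine (D.mem_iSup_iff fun p => (D.bcD_le_bcN p _).trans inf_le_right).2 ⟨hx, fun p => ?_⟩
  rw [← hD p (k - p)]
  exact ⟨⟨(hpr_bcN p).1, hpr_aeD p⟩, D.pr_mem p _ x⟩

lemma SatisfiesDdbarLemma.dRD_inf_dRDConj_le (hD : D.SatisfiesDdbarLemma) (k : ℤ) :
    D.dRD k ⊓ D.dRDConj k ≤ D.ddbarIm k :=
  (le_inf (inf_le_inf (D.dRD_le_dRN k) (D.dRDConj_le_dRNConj k))
    (inf_le_left.trans le_sup_left)).trans (hD.inf_sup_le_ddbarIm k)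

/-- If `∂∂̄x = 0` then `e x` is closed for both differentials, so `e x = 2 ∂∂̄y = e (d y)` for some
`y`, and `x = d y + (x - d y)`. -/
lemma SatisfiesDdbarLemma.ddbarKer_le (hD : D.SatisfiesDdbarLemma) (k : ℤ) :
    D.ddbarKer k ≤ D.dRN k ⊔ D.dRNConj k := by
  rintro x ⟨hddbar, hx⟩
  have hddbar : D.d1 (D.d2 x) = 0 := hddbar
  have hex : D.dTConj x ∈ D.Tot (k + 1) := D.dTConj_mem_Tot rfl hx
  have hex_im : D.dTConj x ∈ D.ddbarIm (k + 1) := by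
    refine hD.inf_sup_le_ddbarIm (k + 1) ⟨⟨⟨?_, hex⟩, ⟨D.dTConj_dTConj x, hex⟩⟩,
      Submodule.mem_sup_right ⟨x, by rwa [add_sub_cancel_right], rfl⟩⟩
    simp [dT_dTConj, hddbar]
  obtain ⟨y, hy, hyx⟩ := hex_im
  have hdy : D.dT ((2⁻¹ : ℂ) • y) ∈ D.Tot k :=
    D.dT_mem_Tot (by omega) (Submodule.smul_mem _ _ hy)
  rw [← add_sub_cancel (D.dT ((2⁻¹ : ℂ) • y)) x]
  refine Submodule.add_mem_sup ⟨D.dT_dT _, hdy⟩ ⟨?_, sub_mem hx hdy⟩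
  rw [SetLike.mem_coe, LinearMap.mem_ker, map_sub, ← hyx, dTConj_dT, LinearMap.comp_apply]
  simp only [map_smul]
  module

variable (D)

lemma mem_bcD_of_mem_ddbarIm {p q k : ℤ} (h : p + q = k) {x : V} (hx : x ∈ D.K p q)
    (him : x ∈ D.ddbarIm k) : x ∈ D.bcD p q := by
  obtain rfl : q = k - p := by omega
  rw [← iSup_bcD, D.mem_iSup_iff fun p => (D.bcD_le_bcN p _).trans inf_le_right] at him
  simpa only [D.pr_of_mem hx] using him.2 p

/-- Writing `x = u + v` with `d u = 0` and `e v = 0`, the partner of `x` is `u - v`. -/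
lemma exists_d1_eq_neg_d2 {x : V} (hx : x ∈ LinearMap.ker D.dT ⊔ LinearMap.ker D.dTConj) :
    ∃ w, D.d1 x = -D.d2 w ∧ D.d2 x = -D.d1 w := by
  obtain ⟨u, hu, v, hv, rfl⟩ := Submodule.mem_sup.1 hx
  have hu : D.d1 u = -D.d2 u := eq_neg_of_add_eq_zero_left hu
  have hv : D.d1 v = D.d2 v := sub_eq_zero.1 hv
  refine ⟨u - v, ?_, ?_⟩ <;> simp only [map_add, map_sub, hu, hv] <;> abel

lemma d1_mem_dRD_inf_dRDConj {k : ℤ} {x : V} (hx : x ∈ D.Tot (k - 1)) (h : D.d2 x = 0) :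
    D.d1 x ∈ D.dRD k ⊓ D.dRDConj k :=
  ⟨⟨x, hx, by rw [dT_apply, h, add_zero]⟩, ⟨x, hx, by rw [dTConj_apply, h, sub_zero]⟩⟩

lemma d2_mem_dRD_inf_dRDConj {k : ℤ} {x : V} (hx : x ∈ D.Tot (k - 1)) (h : D.d1 x = 0) :
    D.d2 x ∈ D.dRD k ⊓ D.dRDConj k :=
  ⟨⟨x, hx, by rw [dT_apply, h, zero_add]⟩,
    ⟨-x, neg_mem hx, by rw [map_neg, dTConj_apply, h, zero_sub, neg_neg]⟩⟩

/-- By degree reasons, the component `w'` of the partner of `x` in bidegree `(p + 1, q - 1)`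
satisfies `∂w' = 0`, while still `∂x = -∂̄w'`. -/
lemma d1_mem_dRD_inf_dRDConj_of_mem_K {p q k : ℤ} (hk : p + q = k - 1) {x : V}
    (hx : x ∈ D.K p q) (hsum : x ∈ LinearMap.ker D.dT ⊔ LinearMap.ker D.dTConj) :
    D.d1 x ∈ D.dRD k ⊓ D.dRDConj k := by
  obtain ⟨w, h1, h2⟩ := D.exists_d1_eq_neg_d2 hsum
  have hd2 : D.d2 (D.pr (p + 1) (q - 1) w) = -D.d1 x := by
    rw [d2_pr, sub_add_cancel, ← neg_eq_iff_eq_neg.2 h1, map_neg,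
      D.pr_of_mem (D.d1_mem p q x hx)]
  have hd1 : D.d1 (D.pr (p + 1) (q - 1) w) = 0 := by
    rw [d1_pr, ← neg_eq_iff_eq_neg.2 h2, map_neg,
      D.pr_of_mem_of_ne (D.d2_mem p q x hx) (by omega), neg_zero]
  rw [← neg_eq_iff_eq_neg.2 hd2]
  exact neg_mem (D.d2_mem_dRD_inf_dRDConj (D.K_le_Tot (by omega) (D.pr_mem _ _ w)) hd1)

lemma d2_mem_dRD_inf_dRDConj_of_mem_K {p q k : ℤ} (hk : p + q = k - 1) {x : V}
    (hx : x ∈ D.K p q) (hsum : x ∈ LinearMap.ker D.dT ⊔ LinearMap.ker D.dTConj) :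
    D.d2 x ∈ D.dRD k ⊓ D.dRDConj k := by
  obtain ⟨w, h1, h2⟩ := D.exists_d1_eq_neg_d2 hsum
  have hd1 : D.d1 (D.pr (p - 1) (q + 1) w) = -D.d2 x := by
    rw [d1_pr, sub_add_cancel, ← neg_eq_iff_eq_neg.2 h2, map_neg,
      D.pr_of_mem (D.d2_mem p q x hx)]
  have hd2 : D.d2 (D.pr (p - 1) (q + 1) w) = 0 := by
    rw [d2_pr, ← neg_eq_iff_eq_neg.2 h1, map_neg,
      D.pr_of_mem_of_ne (D.d1_mem p q x hx) (by omega), neg_zero]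
  rw [← neg_eq_iff_eq_neg.2 hd1]
  exact neg_mem (D.d1_mem_dRD_inf_dRDConj (D.K_le_Tot (by omega) (D.pr_mem _ _ w)) hd2)

lemma bcD_le_conjD (p q : ℤ) : D.bcD p q ≤ D.conjD p q := by
  rintro _ ⟨x, hx, rfl⟩
  exact ⟨D.d2 x, D.d2_mem_K hx, rfl⟩

lemma satisfiesDdbarLemma_of_le (him : ∀ k, D.dRD k ⊓ D.dRDConj k ≤ D.ddbarIm k)
    (hker : ∀ k, D.ddbarKer k ≤ D.dRN k ⊔ D.dRNConj k) : D.SatisfiesDdbarLemma := by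
  have hsum {p q : ℤ} {x : V} (hx : x ∈ D.K p q) (h : D.d1 (D.d2 x) = 0) :
      x ∈ LinearMap.ker D.dT ⊔ LinearMap.ker D.dTConj := by
    have hle : D.dRN (p + q) ⊔ D.dRNConj (p + q) ≤ LinearMap.ker D.dT ⊔ LinearMap.ker D.dTConj :=
      sup_le_sup inf_le_left inf_le_left
    exact hle (hker (p + q) ⟨h, D.K_le_Tot rfl hx⟩)
  refine fun p q => le_antisymm ?_ (le_inf (le_inf ?_ ?_) ?_)
  · rintro _ ⟨⟨⟨h1, h2⟩, himage⟩, -⟩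
    obtain ⟨_, ⟨x, hx, rfl⟩, _, ⟨y, hy, rfl⟩, rfl⟩ := Submodule.mem_sup.1 himage
    have hddbar_x : D.d1 (D.d2 x) = 0 := by simpa [d2_d2_apply, d2_d1_apply] using h2
    have hddbar_y : D.d1 (D.d2 y) = 0 := by simpa [d1_d1_apply] using h1
    exact add_mem
      (D.mem_bcD_of_mem_ddbarIm rfl (D.d1_mem_K hx)
        (him _ (D.d1_mem_dRD_inf_dRDConj_of_mem_K (by omega) hx (hsum hx hddbar_x))))
      (D.mem_bcD_of_mem_ddbarIm rfl (D.d2_mem_K hy)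
        (him _ (D.d2_mem_dRD_inf_dRDConj_of_mem_K (by omega) hy (hsum hy hddbar_y))))
  · exact (D.bcD_le_bcN p q).trans inf_le_left
  · exact (D.bcD_le_conjD p q).trans le_sup_left
  · exact (D.bcD_le_bcN p q).trans inf_le_right

theorem satisfiesDdbarLemma_iff :
    D.SatisfiesDdbarLemma ↔ ∀ k,
      D.dRD k ⊓ D.dRDConj k ≤ D.ddbarIm k ∧ D.ddbarKer k ≤ D.dRN k ⊔ D.dRNConj k :=
  ⟨fun hD k => ⟨hD.dRD_inf_dRDConj_le k, hD.ddbarKer_le k⟩,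
    fun h => D.satisfiesDdbarLemma_of_le (fun k => (h k).1) fun k => (h k).2⟩

end DdbarLemma

end DoubleComplex

open DoubleComplex in
/-- A bounded double complex of finite-dimensional complex vector spaces satisfies the
`∂∂̄`-lemma if and only if `Δ_k := Σ_{p+q=k} (h_BC^{p,q} + h_A^{p,q}) − 2 b_k = 0`
for every `k`. -/
theorem ddbar_iff_delta_eq_zero {V : Type*} [AddCommGroup V] [Module ℂ V]
    [FiniteDimensional ℂ V] (D : DoubleComplex V) (hb : D.Bounded) :
    D.SatisfiesDdbarLemma ↔
      ∀ k : ℤ,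
        (∑ᶠ p : ℤ, ((D.hBC p (k - p) : ℤ) + (D.hAe p (k - p) : ℤ))) - 2 * (D.b k : ℤ) = 0 :=
  D.satisfiesDdbarLemma_iff.trans (forall_congr' fun k => (D.delta_eq_zero_iff k).symm)
end

section
/- Under the dd^c-lemma hypothesis, every d-closed element is d-cohomologous to a d^c-closed element: ker d ⊆ (ker d ∩ ker d^c) + im d. Consequently, the inclusion (ker d^c, d) → (V, d) induces a surjection in d-cohomology. -/
open Submodule

/-- The `dd^c`-lemma hypothesis: `im d ∩ ker d^c ⊆ im (d ∘ d^c)` and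
`ker d ∩ im d^c ⊆ im (d ∘ d^c)`. -/
def DdcLemma {V : Type*} [AddCommGroup V] [Module ℂ V] (d dc : V →ₗ[ℂ] V) : Prop :=
  LinearMap.range d ⊓ LinearMap.ker dc ≤ LinearMap.range (d ∘ₗ dc) ∧
  LinearMap.ker d ⊓ LinearMap.range dc ≤ LinearMap.range (d ∘ₗ dc)

/-- The map in `d`-cohomology induced by the inclusion of the complex `(ker d^c, d)`
into `(V, d)`: from `H(ker d^c, d) = (ker d ∩ ker d^c)/d(ker d^c)` to
`H_dR = ker d / im d`. -/
def inclCohMap {V : Type*} [AddCommGroup V] [Module ℂ V] (d dc : V →ₗ[ℂ] V) :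
    (↥(LinearMap.ker d ⊓ LinearMap.ker dc) ⧸
        ((LinearMap.ker dc).map d).comap (LinearMap.ker d ⊓ LinearMap.ker dc).subtype)
      →ₗ[ℂ]
    (↥(LinearMap.ker d) ⧸ (LinearMap.range d).comap (LinearMap.ker d).subtype) :=
  quotMap inf_le_left LinearMap.map_le_range

section

variable {R M : Type*} [Ring R] [AddCommGroup M] [Module R M]

theorem mapQ_inclusion_surjective_iff {M₁ N₁ M₂ N₂ : Submodule R M} (hM : M₁ ≤ M₂)
    (hN : N₁.comap M₁.subtype ≤ (N₂.comap M₂.subtype).comap (inclusion hM)) :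
    Function.Surjective (mapQ _ _ (inclusion hM) hN) ↔ M₂ ≤ M₁ ⊔ N₂ := by
  have hmap : (N₂.comap M₂.subtype ⊔ LinearMap.range (inclusion hM)).map M₂.subtype =
      (M₁ ⊔ N₂) ⊓ M₂ := by
    rw [Submodule.map_sup, map_comap_subtype, map_subtype_range_inclusion, inf_comm, sup_comm,
      sup_inf_assoc_of_le N₂ hM]
  rw [← LinearMap.range_eq_top, range_mapQ, map_mkQ_eq_top,
    ← (map_injective_of_injective M₂.injective_subtype).eq_iff, hmap, map_subtype_top,
    inf_eq_right]

theorem ker_le_ker_inf_ker_sup_range (d dc : M →ₗ[R] M) (hd : d ∘ₗ d = 0)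
    (hanti : d ∘ₗ dc + dc ∘ₗ d = 0)
    (hlem : LinearMap.ker d ⊓ LinearMap.range dc ≤ LinearMap.range (d ∘ₗ dc)) :
    LinearMap.ker d ≤ (LinearMap.ker d ⊓ LinearMap.ker dc) ⊔ LinearMap.range d := by
  intro x (hx : d x = 0)
  have hanti_apply (v : M) : d (dc v) + dc (d v) = 0 := LinearMap.congr_fun hanti v
  have hddcx : d (dc x) = 0 := by simpa only [hx, map_zero, add_zero] using hanti_apply x
  obtain ⟨y, hy : d (dc y) = dc x⟩ := hlem ⟨hddcx, x, rfl⟩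
  have hd_closed : d (x + d y) = 0 := by
    rw [map_add, hx, zero_add]
    exact LinearMap.congr_fun hd y
  have hdc_closed : dc (x + d y) = 0 :=
    calc dc (x + d y) = dc x + dc (d y) := map_add dc x (d y)
      _ = d (dc y) + dc (d y) := by rw [hy]
      _ = 0 := hanti_apply y
  exact mem_sup.2 ⟨x + d y, ⟨hd_closed, hdc_closed⟩, -d y, neg_mem ⟨y, rfl⟩,
    add_neg_cancel_right x (d y)⟩

theorem ddc_incl_surjective_general (d dc : M →ₗ[R] M) (hd : d ∘ₗ d = 0)
    (hanti : d ∘ₗ dc + dc ∘ₗ d = 0)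
    (hlem : LinearMap.ker d ⊓ LinearMap.range dc ≤ LinearMap.range (d ∘ₗ dc)) :
    LinearMap.ker d ≤ (LinearMap.ker d ⊓ LinearMap.ker dc) ⊔ LinearMap.range d ∧
    Function.Surjective
      (mapQ (((LinearMap.ker dc).map d).comap (LinearMap.ker d ⊓ LinearMap.ker dc).subtype)
        ((LinearMap.range d).comap (LinearMap.ker d).subtype)
        (inclusion inf_le_left) fun _ hx => LinearMap.map_le_range hx) := by
  have hle := ker_le_ker_inf_ker_sup_range d dc hd hanti hlem
  exact ⟨hle, (mapQ_inclusion_surjective_iff _ _).2 hle⟩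

end

/-- Under the `dd^c`-lemma, every `d`-closed element is `d`-cohomologous to a
`d^c`-closed element; consequently the inclusion `(ker d^c, d) → (V, d)` induces a
surjection in `d`-cohomology. -/
theorem ddc_incl_surjective {V : Type*} [AddCommGroup V] [Module ℂ V]
    (d dc : V →ₗ[ℂ] V) (hd : d ∘ₗ d = 0) (hdc : dc ∘ₗ dc = 0)
    (hanti : d ∘ₗ dc + dc ∘ₗ d = 0) (hlem : DdcLemma d dc) :
    LinearMap.ker d ≤ (LinearMap.ker d ⊓ LinearMap.ker dc) ⊔ LinearMap.range d ∧
    Function.Surjective (inclCohMap d dc) :=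
  ddc_incl_surjective_general d dc hd hanti hlem.2
end

section
/- Under the dd^c-lemma hypothesis, every d^c-closed element that is d-exact is the d-image of a d^c-closed element: im d ∩ ker d^c ⊆ d(ker d^c). Consequently, the inclusion (ker d^c, d) → (V, d) induces an injection in d-cohomology. -/
open Submodule

section Quotient

variable {R M : Type*} [Ring R] [AddCommGroup M] [Module R M]

theorem mapQ_injective_iff {R₂ M₂ : Type*} [Ring R₂] [AddCommGroup M₂] [Module R₂ M₂] {σ : R →+* R₂}
    {p : Submodule R M} {q : Submodule R₂ M₂} {f : M →ₛₗ[σ] M₂} (h : p ≤ q.comap f) :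
    Function.Injective (p.mapQ q f h) ↔ q.comap f ≤ p := by
  rw [← LinearMap.ker_eq_bot, ker_mapQ, ← le_bot_iff, map_le_iff_le_comap, comap_bot, ker_mkQ]

theorem mapQ_inclusion_injective_iff {M₁ N₁ M₂ N₂ : Submodule R M} (hM : M₁ ≤ M₂)
    (h : N₁.comap M₁.subtype ≤ (N₂.comap M₂.subtype).comap (inclusion hM)) :
    Function.Injective (mapQ _ _ (inclusion hM) h) ↔ M₁ ⊓ N₂ ≤ N₁ := by
  rw [mapQ_injective_iff, ← comap_comp, subtype_comp_inclusion, ← map_le_iff_le_comap,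
    map_comap_subtype]

end Quotient

theorem range_comp_le_map_ker {R L M N P : Type*} [Semiring R]
    [AddCommMonoid L] [AddCommMonoid M] [AddCommMonoid N] [AddCommMonoid P]
    [Module R L] [Module R M] [Module R N] [Module R P]
    (f : M →ₗ[R] N) {g : L →ₗ[R] M} {h : M →ₗ[R] P} (hhg : h ∘ₗ g = 0) :
    LinearMap.range (f ∘ₗ g) ≤ (LinearMap.ker h).map f := by
  rw [LinearMap.range_comp]
  exact map_mono (LinearMap.range_le_ker_iff.mpr hhg)

theorem ddc_incl_injective_general {R V : Type*} [Ring R] [AddCommGroup V] [Module R V]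
    (d dc : V →ₗ[R] V) (hdc : dc ∘ₗ dc = 0)
    (hexact : LinearMap.range d ⊓ LinearMap.ker dc ≤ LinearMap.range (d ∘ₗ dc)) :
    LinearMap.range d ⊓ LinearMap.ker dc ≤ (LinearMap.ker dc).map d ∧
    Function.Injective
      (mapQ (((LinearMap.ker dc).map d).comap (LinearMap.ker d ⊓ LinearMap.ker dc).subtype)
        ((LinearMap.range d).comap (LinearMap.ker d).subtype)
        (inclusion inf_le_left) fun _ hx => LinearMap.map_le_range hx) := by
  have hprimitive : LinearMap.range d ⊓ LinearMap.ker dc ≤ (LinearMap.ker dc).map d :=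
    hexact.trans (range_comp_le_map_ker d hdc)
  refine ⟨hprimitive, (mapQ_inclusion_injective_iff _ _).mpr ?_⟩
  rintro x ⟨⟨-, hx_closed⟩, hx_exact⟩
  exact hprimitive ⟨hx_exact, hx_closed⟩

/-- Under the `dd^c`-lemma, every `d^c`-closed `d`-exact element is the `d`-image of a
`d^c`-closed element; consequently the inclusion `(ker d^c, d) → (V, d)` induces an
injection in `d`-cohomology. -/
theorem ddc_incl_injective {V : Type*} [AddCommGroup V] [Module ℂ V]
    (d dc : V →ₗ[ℂ] V) (hd : d ∘ₗ d = 0) (hdc : dc ∘ₗ dc = 0)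
    (hanti : d ∘ₗ dc + dc ∘ₗ d = 0) (hlem : DdcLemma d dc) :
    LinearMap.range d ⊓ LinearMap.ker dc ≤ (LinearMap.ker dc).map d ∧
    Function.Injective (inclCohMap d dc) := by
  exact ddc_incl_injective_general d dc hdc hlem.1
end

section
/- Under the dd^c-lemma hypothesis, one has ker d^c ⊆ (ker d ∩ ker d^c) + im d^c and ker d ∩ im d^c ⊆ d(ker d^c). Consequently, the natural projection (ker d^c, d) → (H_{d^c}, 0), where H_{d^c} = ker d^c / im d^c, induces a bijection in cohomology. -/
open Submodule

/-! Put `Z = ker d ∩ ker d^c` and `B = im d^c`. Anticommutativity makes `d` preserve `ker d^c`, so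
the first half of the `dd^c`-lemma gives `d (ker d^c) ⊆ im (d ∘ d^c) = d B`. Hence every element of
`ker d^c` differs from an element of `B` by an element of `ker d`, that is, `Z + B = ker d^c`. The
second half gives `Z ∩ B ⊆ im (d ∘ d^c) ⊆ d (ker d^c)`, while `d (ker d^c) ⊆ im (d ∘ d^c) ⊆ B`; thus
`B` and `d (ker d^c)` cut out the same submodule of `Z`, and the isomorphism in cohomology is the
second isomorphism theorem `Z / (Z ∩ B) ≃ (Z + B) / B`. -/

section Submodules

variable {R M M₂ : Type*} [Ring R] [AddCommGroup M] [Module R M] [AddCommGroup M₂] [Module R M₂]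

theorem ker_inf_sup_eq_of_map_le_map {f : M →ₗ[R] M₂} {p q : Submodule R M} (hqp : q ≤ p)
    (hmap : p.map f ≤ q.map f) : LinearMap.ker f ⊓ p ⊔ q = p := by
  have hp : p ≤ q ⊔ LinearMap.ker f := (LinearMap.map_le_map_iff f).1 hmap
  rw [sup_comm, ← sup_inf_assoc_of_le _ hqp, inf_eq_right.2 hp]

theorem exists_quotient_equiv_of_sup_eq_of_inf_eq {p q m n : Submodule R M} (hsup : p ⊔ n = q)
    (hinf : p ⊓ m = p ⊓ n) :
    ∃ e : (p ⧸ m.comap p.subtype) ≃ₗ[R] (q ⧸ n.comap q.subtype),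
      ∀ (x : M) (hp : x ∈ p) (hq : x ∈ q),
        e (Submodule.Quotient.mk ⟨x, hp⟩) = Submodule.Quotient.mk ⟨x, hq⟩ := by
  subst hsup
  have hcomap : m.comap p.subtype = p.comap p.subtype ⊓ n.comap p.subtype := by
    rw [← comap_inf, ← hinf, comap_inf, comap_subtype_self, top_inf_eq]
  exact ⟨quotEquivOfEq _ _ hcomap ≪≫ₗ LinearMap.quotientInfEquivSupQuotient p n,
    fun _ _ _ => rfl⟩

end Submodules

section Anticommuting

variable {R V : Type*} [Ring R] [AddCommGroup V] [Module R V] {d dc : V →ₗ[R] V}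

theorem map_ker_le_ker_of_anticomm (hanti : d ∘ₗ dc + dc ∘ₗ d = 0) :
    (LinearMap.ker dc).map d ≤ LinearMap.ker dc := by
  rintro _ ⟨x, hx, rfl⟩
  simpa [LinearMap.mem_ker.1 hx] using LinearMap.congr_fun hanti x

theorem range_comp_le_range_of_anticomm (hanti : d ∘ₗ dc + dc ∘ₗ d = 0) :
    LinearMap.range (d ∘ₗ dc) ≤ LinearMap.range dc := by
  rw [eq_neg_of_add_eq_zero_left hanti, LinearMap.range_neg]
  exact LinearMap.range_comp_le_range d dc

theorem map_ker_le_range_comp (hanti : d ∘ₗ dc + dc ∘ₗ d = 0)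
    (him : LinearMap.range d ⊓ LinearMap.ker dc ≤ LinearMap.range (d ∘ₗ dc)) :
    (LinearMap.ker dc).map d ≤ LinearMap.range (d ∘ₗ dc) :=
  (le_inf LinearMap.map_le_range (map_ker_le_ker_of_anticomm hanti)).trans him

theorem ker_inf_ker_sup_range_eq (hdc : dc ∘ₗ dc = 0) (hanti : d ∘ₗ dc + dc ∘ₗ d = 0)
    (him : LinearMap.range d ⊓ LinearMap.ker dc ≤ LinearMap.range (d ∘ₗ dc)) :
    LinearMap.ker d ⊓ LinearMap.ker dc ⊔ LinearMap.range dc = LinearMap.ker dc :=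
  ker_inf_sup_eq_of_map_le_map (LinearMap.range_le_ker_iff.2 hdc)
    ((map_ker_le_range_comp hanti him).trans_eq (LinearMap.range_comp dc d))

theorem ker_inf_range_le_map_ker (hdc : dc ∘ₗ dc = 0)
    (hker : LinearMap.ker d ⊓ LinearMap.range dc ≤ LinearMap.range (d ∘ₗ dc)) :
    LinearMap.ker d ⊓ LinearMap.range dc ≤ (LinearMap.ker dc).map d :=
  calc
    LinearMap.ker d ⊓ LinearMap.range dc ≤ LinearMap.range (d ∘ₗ dc) := hker
    _ = (LinearMap.range dc).map d := LinearMap.range_comp dc d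
    _ ≤ (LinearMap.ker dc).map d := map_mono (LinearMap.range_le_ker_iff.2 hdc)

theorem ker_inf_ker_inf_map_ker_eq (hdc : dc ∘ₗ dc = 0) (hanti : d ∘ₗ dc + dc ∘ₗ d = 0)
    (him : LinearMap.range d ⊓ LinearMap.ker dc ≤ LinearMap.range (d ∘ₗ dc))
    (hker : LinearMap.ker d ⊓ LinearMap.range dc ≤ LinearMap.range (d ∘ₗ dc)) :
    LinearMap.ker d ⊓ LinearMap.ker dc ⊓ (LinearMap.ker dc).map d =
      LinearMap.ker d ⊓ LinearMap.ker dc ⊓ LinearMap.range dc := by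
  apply le_antisymm
  · exact inf_le_inf_left _
      ((map_ker_le_range_comp hanti him).trans (range_comp_le_range_of_anticomm hanti))
  · exact le_inf inf_le_left
      ((inf_le_inf_right _ inf_le_left).trans (ker_inf_range_le_map_ker hdc hker))

theorem ddc_projection_quasi_iso_general (hdc : dc ∘ₗ dc = 0) (hanti : d ∘ₗ dc + dc ∘ₗ d = 0)
    (him : LinearMap.range d ⊓ LinearMap.ker dc ≤ LinearMap.range (d ∘ₗ dc))
    (hker : LinearMap.ker d ⊓ LinearMap.range dc ≤ LinearMap.range (d ∘ₗ dc)) :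
    LinearMap.ker dc ≤ (LinearMap.ker d ⊓ LinearMap.ker dc) ⊔ LinearMap.range dc ∧
    LinearMap.ker d ⊓ LinearMap.range dc ≤ (LinearMap.ker dc).map d ∧
    ∃ e : (↥(LinearMap.ker d ⊓ LinearMap.ker dc) ⧸
            ((LinearMap.ker dc).map d).comap
              (LinearMap.ker d ⊓ LinearMap.ker dc).subtype) ≃ₗ[R]
          (↥(LinearMap.ker dc) ⧸
            (LinearMap.range dc).comap (LinearMap.ker dc).subtype),
      ∀ (x : V) (hx : x ∈ LinearMap.ker d ⊓ LinearMap.ker dc),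
        e (Submodule.Quotient.mk ⟨x, hx⟩) = Submodule.Quotient.mk ⟨x, hx.2⟩ := by
  have hsup := ker_inf_ker_sup_range_eq hdc hanti him
  obtain ⟨e, he⟩ := exists_quotient_equiv_of_sup_eq_of_inf_eq hsup
    (ker_inf_ker_inf_map_ker_eq hdc hanti him hker)
  exact ⟨hsup.ge, ker_inf_range_le_map_ker hdc hker, e, fun x hx => he x hx hx.2⟩

end Anticommuting

/-- Under the `dd^c`-lemma, `ker d^c ⊆ (ker d ∩ ker d^c) + im d^c` and
`ker d ∩ im d^c ⊆ d(ker d^c)`; consequently the natural projection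
`(ker d^c, d) → (H_{d^c}, 0)` induces a bijection in cohomology,
`(ker d ∩ ker d^c)/d(ker d^c) ≃ ker d^c / im d^c`, given on classes of
representatives by the identity. -/
theorem ddc_projection_quasi_iso {V : Type*} [AddCommGroup V] [Module ℂ V]
    (d dc : V →ₗ[ℂ] V) (hd : d ∘ₗ d = 0) (hdc : dc ∘ₗ dc = 0)
    (hanti : d ∘ₗ dc + dc ∘ₗ d = 0) (hlem : DdcLemma d dc) :
    LinearMap.ker dc ≤ (LinearMap.ker d ⊓ LinearMap.ker dc) ⊔ LinearMap.range dc ∧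
    LinearMap.ker d ⊓ LinearMap.range dc ≤ (LinearMap.ker dc).map d ∧
    ∃ e : (↥(LinearMap.ker d ⊓ LinearMap.ker dc) ⧸
            ((LinearMap.ker dc).map d).comap
              (LinearMap.ker d ⊓ LinearMap.ker dc).subtype) ≃ₗ[ℂ]
          (↥(LinearMap.ker dc) ⧸
            (LinearMap.range dc).comap (LinearMap.ker dc).subtype),
      ∀ (x : V) (hx : x ∈ LinearMap.ker d ⊓ LinearMap.ker dc),
        e (Submodule.Quotient.mk ⟨x, hx⟩) = Submodule.Quotient.mk ⟨x, hx.2⟩ := by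
  exact ddc_projection_quasi_iso_general hdc hanti hlem.1 hlem.2
end

section
/- Let L be a Lie algebra over a field F, and for each k ≥ 0 let d be the Chevalley–Eilenberg differential sending an alternating k-linear form α : L^k → F to the alternating (k+1)-linear form (dα)(y_1,…,y_{k+1}) = Σ_{1≤i<j≤k+1} (−1)^{i+j} α([y_i,y_j], y_1, …, ŷ_i, …, ŷ_j, …, y_{k+1}) (hats denoting omitted arguments). Then d∘d = 0. -/
/-- The Chevalley–Eilenberg differential: it sends a `k`-argument form
`α : L^k → F` to the `(k+1)`-argument form
`(dα)(y_1,…,y_{k+1}) = Σ_{i<j} (−1)^{i+j} α([y_i,y_j], y_1,…,ŷ_i,…,ŷ_j,…,y_{k+1})`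
(hats denoting omitted arguments; here indices are 0-based, which yields the same
signs as the 1-based formula). -/
def ceDiff (F : Type*) [Field F] (L : Type*) [LieRing L] [LieAlgebra F L] :
    ∀ k : ℕ, ((Fin k → L) → F) → (Fin (k + 1) → L) → F
  | 0, _, _ => 0
  | (k + 1), α, y =>
      ∑ j : Fin (k + 2), ∑ i : Fin (k + 2),
        if hij : i < j then
          (-1 : F) ^ ((i : ℕ) + (j : ℕ)) *
            α (Fin.cons ⁅y i, y j⁆
                (fun t : Fin k =>
                  y (j.succAbove
                      ((⟨(i : ℕ), lt_of_lt_of_le (Fin.lt_def.mp hij)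
                          (Nat.lt_succ_iff.mp j.isLt)⟩ : Fin (k + 1)).succAbove t))))
        else 0

/-!
Write `ι_x α` for the form `α` with `x` inserted in the first argument, and `𝓛_x` for the Lie
derivative. The differential satisfies Cartan's formula `ι_x (d α) = 𝓛_x α - d (ι_x α)`. As a form
is determined by its slices `ι_x α`, this formula turns identities between `d` and `𝓛` into
inductions on the degree: combined with `ι_y (𝓛_x α) = 𝓛_x (ι_y α) - ι_[x,y] α` and
`𝓛_[x,y] = 𝓛_x 𝓛_y - 𝓛_y 𝓛_x`, it gives `𝓛_x d = d 𝓛_x`, and then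
`ι_x (d (d α)) = 𝓛_x (d α) - d (𝓛_x α) + d (d (ι_x α)) = 0`.

For the induction step one has to know that `d α` is again alternating. This too is read off from
Cartan's formula, which is therefore taken as the definition of `d`, by recursion on the degree;
unwinding the recursion gives the sum over pairs `i < j`.
-/

open AlternatingMap hiding map_zero zero_apply

theorem removeNth_succ_vecCons {X : Type*} {n : ℕ} (j : Fin (n + 1)) (x : X) (v : Fin (n + 1) → X) :
    j.succ.removeNth (Matrix.vecCons x v) = Matrix.vecCons x (j.removeNth v) :=
  Fin.cons_comp_succ_succAbove x v j

theorem tail_removeNth_succ_vecCons {X : Type*} {n : ℕ} (j : Fin (n + 1)) (x : X)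
    (v : Fin (n + 1) → X) :
    Fin.tail (j.succ.removeNth (Matrix.vecCons x v)) = j.removeNth v := by
  ext i
  simp [Fin.tail, Fin.removeNth_apply]

theorem sum_castSucc_lt_eq_sum_zero_add {A : Type*} [AddCommMonoid A] {n : ℕ}
    (f : Fin (n + 1) → Fin (n + 2) → A) :
    (∑ j : Fin (n + 2), ∑ i : Fin (n + 1), if i.castSucc < j then f i j else 0) =
      ∑ j : Fin (n + 1), f 0 j.succ +
        ∑ j : Fin (n + 1), ∑ i : Fin n, if i.castSucc < j then f i.succ j.succ else 0 := by
  rw [Fin.sum_univ_succ]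
  simp only [Fin.not_lt_zero, if_false, Finset.sum_const_zero, zero_add]
  rw [← Finset.sum_add_distrib]
  refine Finset.sum_congr rfl fun j _ => ?_
  rw [Fin.sum_univ_succ, Fin.castSucc_zero, if_pos j.succ_pos]
  simp only [Fin.castSucc_succ, Fin.succ_lt_succ_iff]

section Currying

variable {R M N : Type*} [CommRing R] [AddCommGroup M] [Module R M] [AddCommGroup N] [Module R N]
  {n : ℕ}

theorem alternatingMap_ext_curryLeft {f g : M [⋀^Fin (n + 1)]→ₗ[R] N}
    (h : ∀ x, f.curryLeft x = g.curryLeft x) : f = g := by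
  ext v
  rw [← Fin.cons_self_tail v]
  exact congr($(h (v 0)) (Fin.tail v))

theorem curryLeft_sub (f g : M [⋀^Fin (n + 1)]→ₗ[R] N) :
    (f - g).curryLeft = f.curryLeft - g.curryLeft := rfl

theorem curryLeft_neg (f : M [⋀^Fin (n + 1)]→ₗ[R] N) : (-f).curryLeft = -f.curryLeft := rfl

theorem curryLeft_curryLeft_swap (f : M [⋀^Fin (n + 2)]→ₗ[R] N) (x y : M) :
    (f.curryLeft x).curryLeft y = -(f.curryLeft y).curryLeft x := by
  have h := f.curryLeft_same (x + y)
  simp only [map_add, curryLeft_add, LinearMap.add_apply, curryLeft_same, zero_add, add_zero] at h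
  exact eq_neg_of_add_eq_zero_right h

theorem map_vecCons_vecCons_swap (f : M [⋀^Fin (n + 2)]→ₗ[R] N) (x y : M) (v : Fin n → M) :
    f (Matrix.vecCons x (Matrix.vecCons y v)) = -f (Matrix.vecCons y (Matrix.vecCons x v)) :=
  congr($(curryLeft_curryLeft_swap f x y) v)

theorem map_eq_zero_of_curryLeft_eq_zero {f : M [⋀^Fin (n + 1)]→ₗ[R] N} {v : Fin (n + 1) → M}
    (i : Fin (n + 1)) (h : f.curryLeft (v i) = 0) : f v = 0 := by
  rw [← Fin.insertNth_self_removeNth i v, map_insertNth, ← curryLeft_apply_apply, h,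
    AlternatingMap.zero_apply, smul_zero]

/-- The alternating map `(x, v) ↦ f x v`, for building an alternating map from its slices. Each
`f x` being alternating, only repetitions of the first argument remain to be checked; moving the
repeated argument to the front reduces these to `f x (x, …) = 0`. -/
def alternatingUncurryLeft (f : M →ₗ[R] M [⋀^Fin (n + 1)]→ₗ[R] N)
    (hf : ∀ x, (f x).curryLeft x = 0) : M [⋀^Fin (n + 2)]→ₗ[R] N where
  toMultilinearMap := (toMultilinearMapLM ∘ₗ f).uncurryLeft
  map_eq_zero_of_eq' v i j hv hij := by
    have eq_zero_of_head {l : Fin (n + 1)} (hl : v l.succ = v 0) : f (v 0) (Fin.tail v) = 0 :=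
      map_eq_zero_of_curryLeft_eq_zero l (by rw [Fin.tail, hl, hf])
    change f (v 0) (Fin.tail v) = 0
    cases i using Fin.cases with
    | zero =>
      obtain ⟨j, rfl⟩ := Fin.exists_succ_eq.mpr hij.symm
      exact eq_zero_of_head hv.symm
    | succ i =>
      cases j using Fin.cases with
      | zero => exact eq_zero_of_head hv
      | succ j => exact (f (v 0)).map_eq_zero_of_eq _ hv (ne_of_apply_ne _ hij)

theorem curryLeft_alternatingUncurryLeft (f : M →ₗ[R] M [⋀^Fin (n + 1)]→ₗ[R] N)
    (hf : ∀ x, (f x).curryLeft x = 0) : (alternatingUncurryLeft f hf).curryLeft = f := rfl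

theorem alternatizeUncurryFin_neg (f : M →ₗ[R] M [⋀^Fin n]→ₗ[R] N) :
    alternatizeUncurryFin (-f) = -alternatizeUncurryFin f :=
  map_neg alternatizeUncurryFinLM f

theorem curryLeft_alternatizeUncurryFin_zero (f : M →ₗ[R] M [⋀^Fin 0]→ₗ[R] N) :
    (alternatizeUncurryFin f).curryLeft = f := by
  ext x v
  simp [alternatizeUncurryFin_apply, Subsingleton.elim _ v]

theorem curryLeft_alternatizeUncurryFin_succ (f : M →ₗ[R] M [⋀^Fin (n + 1)]→ₗ[R] N) (x : M) :
    (alternatizeUncurryFin f).curryLeft x =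
      f x - alternatizeUncurryFin (curryLeftLinearMap.flip x ∘ₗ f) := by
  ext v
  rw [curryLeft_apply_apply, alternatizeUncurryFin_apply, Fin.sum_univ_succ]
  simp [alternatizeUncurryFin_apply, removeNth_succ_vecCons, pow_succ, sub_eq_add_neg]

end Currying

section CartanCalculus

variable {R L N : Type*} [CommRing R] [LieRing L] [LieAlgebra R L] [AddCommGroup N] [Module R N]

/-- The Lie derivative `𝓛_x` of alternating forms on a Lie algebra with values in a module with
trivial action, i.e. the coadjoint action
`(𝓛_x α)(y_1, …, y_k) = -∑ i, α(y_1, …, [x, y_i], …, y_k)`.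
The `i`-th argument is moved to the front, which makes the sum an `alternatizeUncurryFin`. -/
def lieDerivative : ∀ {k : ℕ}, L →ₗ[R] (L [⋀^Fin k]→ₗ[R] N) →ₗ[R] L [⋀^Fin k]→ₗ[R] N
  | 0 => 0
  | _ + 1 => LinearMap.mk₂ R
      (fun x α => -alternatizeUncurryFin (α.curryLeft ∘ₗ (LieAlgebra.ad R L x : L →ₗ[R] L)))
      (by simp [LinearMap.comp_add, add_comm]) (by simp [LinearMap.comp_smul])
      (by simp [LinearMap.add_comp, add_comm]) (by simp [LinearMap.smul_comp])

theorem lieDerivative_succ {k : ℕ} (x : L) (α : L [⋀^Fin (k + 1)]→ₗ[R] N) :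
    lieDerivative x α =
      -alternatizeUncurryFin (α.curryLeft ∘ₗ (LieAlgebra.ad R L x : L →ₗ[R] L)) := rfl

theorem lieDerivative_zero_form (x : L) (α : L [⋀^Fin 0]→ₗ[R] N) : lieDerivative x α = 0 := rfl

theorem curryLeft_lieDerivative {k : ℕ} (x y : L) (α : L [⋀^Fin (k + 1)]→ₗ[R] N) :
    (lieDerivative x α).curryLeft y =
      lieDerivative x (α.curryLeft y) - α.curryLeft ⁅x, y⁆ := by
  cases k with
  | zero =>
    rw [lieDerivative_zero_form, zero_sub, lieDerivative_succ, curryLeft_neg,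
      curryLeft_alternatizeUncurryFin_zero, LinearMap.neg_apply, LinearMap.comp_apply,
      LieAlgebra.ad_apply]
  | succ k =>
    have curryLeft_swap : curryLeftLinearMap.flip y ∘ₗ α.curryLeft = -(α.curryLeft y).curryLeft :=
      LinearMap.ext fun z => curryLeft_curryLeft_swap α z y
    rw [lieDerivative_succ, lieDerivative_succ, curryLeft_neg, LinearMap.neg_apply,
      curryLeft_alternatizeUncurryFin_succ, ← LinearMap.comp_assoc, curryLeft_swap,
      LinearMap.neg_comp, alternatizeUncurryFin_neg, LinearMap.comp_apply,
      LieAlgebra.ad_apply]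
    abel

theorem lieDerivative_lie {k : ℕ} (x y : L) (α : L [⋀^Fin k]→ₗ[R] N) :
    lieDerivative ⁅x, y⁆ α =
      lieDerivative x (lieDerivative y α) - lieDerivative y (lieDerivative x α) := by
  induction k with
  | zero => simp [lieDerivative_zero_form]
  | succ k ih =>
    refine alternatingMap_ext_curryLeft fun z => ?_
    have jacobi : α.curryLeft ⁅⁅x, y⁆, z⁆ = α.curryLeft ⁅x, ⁅y, z⁆⁆ - α.curryLeft ⁅y, ⁅x, z⁆⁆ := by
      rw [lie_lie, map_sub]
    simp only [curryLeft_lieDerivative, curryLeft_sub, LinearMap.sub_apply, map_sub, ih, jacobi]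
    abel

theorem curryLeft_lieDerivative_self {k : ℕ} (x : L) (α : L [⋀^Fin (k + 1)]→ₗ[R] N) :
    (lieDerivative x α).curryLeft x = lieDerivative x (α.curryLeft x) := by
  rw [curryLeft_lieDerivative, lie_self, map_zero, sub_zero]

/-- Cartan's formula for a candidate differential `d` of `k`-forms, restricted to
`ι_x (d (ι_x α))`, where the term `d (ι_x (ι_x α))` vanishes. It makes sense for `d` in a single
degree, and is what makes the differential in the next degree alternating. -/
def CartanOnSlices {k : ℕ} (d : (L [⋀^Fin k]→ₗ[R] N) →ₗ[R] L [⋀^Fin (k + 1)]→ₗ[R] N) : Prop :=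
  ∀ (x : L) (α : L [⋀^Fin (k + 1)]→ₗ[R] N),
    (d (α.curryLeft x)).curryLeft x = lieDerivative x (α.curryLeft x)

/-- The differential of `(k + 1)`-forms which Cartan's formula `ι_x (d α) = 𝓛_x α - d (ι_x α)`
prescribes in terms of the differential `d` of `k`-forms. -/
def ceDifferentialStep {k : ℕ} (d : (L [⋀^Fin k]→ₗ[R] N) →ₗ[R] L [⋀^Fin (k + 1)]→ₗ[R] N)
    (hd : CartanOnSlices d) :
    (L [⋀^Fin (k + 1)]→ₗ[R] N) →ₗ[R] L [⋀^Fin (k + 2)]→ₗ[R] N where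
  toFun α := alternatingUncurryLeft (lieDerivative.flip α - d ∘ₗ α.curryLeft) fun x => by
    change (lieDerivative x α).curryLeft x - (d (α.curryLeft x)).curryLeft x = 0
    rw [hd x α, curryLeft_lieDerivative_self, sub_self]
  map_add' α β := alternatingMap_ext_curryLeft fun x => by
    simp [curryLeft_alternatingUncurryLeft, add_sub_add_comm]
  map_smul' r α := alternatingMap_ext_curryLeft fun x => by
    simp [curryLeft_alternatingUncurryLeft, smul_sub]

theorem curryLeft_ceDifferentialStep {k : ℕ}
    (d : (L [⋀^Fin k]→ₗ[R] N) →ₗ[R] L [⋀^Fin (k + 1)]→ₗ[R] N)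
    (hd : CartanOnSlices d)
    (x : L) (α : L [⋀^Fin (k + 1)]→ₗ[R] N) :
    (ceDifferentialStep d hd α).curryLeft x = lieDerivative x α - d (α.curryLeft x) := rfl

/-- The recursion defining `ceDifferential`, which has to carry along `CartanOnSlices`. -/
def ceDifferentialAux : ∀ k : ℕ, {d : (L [⋀^Fin k]→ₗ[R] N) →ₗ[R] L [⋀^Fin (k + 1)]→ₗ[R] N //
    CartanOnSlices d}
  | 0 => ⟨0, fun _ _ => rfl⟩
  | k + 1 =>
    ⟨ceDifferentialStep (ceDifferentialAux k).1 (ceDifferentialAux k).2, fun x α => by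
      rw [curryLeft_ceDifferentialStep, curryLeft_same, map_zero, sub_zero]⟩

/-- The Chevalley–Eilenberg differential on alternating forms with values in a module with trivial
action, characterised by Cartan's formula `curryLeft_ceDifferential`; see `ceDifferential_apply` for
the formula as a sum over pairs of arguments. -/
def ceDifferential {k : ℕ} : (L [⋀^Fin k]→ₗ[R] N) →ₗ[R] L [⋀^Fin (k + 1)]→ₗ[R] N :=
  (ceDifferentialAux k).1

theorem ceDifferential_zero_form (α : L [⋀^Fin 0]→ₗ[R] N) : ceDifferential α = 0 := rfl

theorem curryLeft_ceDifferential {k : ℕ} (x : L) (α : L [⋀^Fin (k + 1)]→ₗ[R] N) :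
    (ceDifferential α).curryLeft x = lieDerivative x α - ceDifferential (α.curryLeft x) := rfl

theorem ceDifferential_apply_vecCons {k : ℕ} (α : L [⋀^Fin (k + 1)]→ₗ[R] N) (x : L)
    (v : Fin (k + 1) → L) :
    ceDifferential α (Matrix.vecCons x v) =
      lieDerivative x α v - ceDifferential (α.curryLeft x) v := rfl

theorem lieDerivative_ceDifferential {k : ℕ} (x : L) (α : L [⋀^Fin k]→ₗ[R] N) :
    lieDerivative x (ceDifferential α) = ceDifferential (lieDerivative x α) := by
  induction k with
  | zero => simp [ceDifferential_zero_form]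
  | succ k ih =>
    refine alternatingMap_ext_curryLeft fun y => ?_
    simp only [curryLeft_lieDerivative, curryLeft_ceDifferential, lieDerivative_lie, map_sub, ih]
    abel

theorem lieDerivative_apply {k : ℕ} (x : L) (α : L [⋀^Fin (k + 1)]→ₗ[R] N)
    (v : Fin (k + 1) → L) :
    lieDerivative x α v =
      -∑ j : Fin (k + 1), (-1 : ℤ) ^ (j : ℕ) • α (Matrix.vecCons ⁅x, v j⁆ (j.removeNth v)) := by
  simp [lieDerivative_succ, alternatizeUncurryFin_apply]

theorem ceDifferential_apply {k : ℕ} (α : L [⋀^Fin (k + 1)]→ₗ[R] N) (v : Fin (k + 2) → L) :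
    ceDifferential α v = ∑ j : Fin (k + 2), ∑ i : Fin (k + 1),
      if i.castSucc < j then (-1 : ℤ) ^ ((i : ℕ) + (j : ℕ)) •
        α (Matrix.vecCons ⁅v i.castSucc, v j⁆ (i.removeNth (j.removeNth v)))
      else 0 := by
  obtain ⟨x, w, rfl⟩ : ∃ x w, v = Matrix.vecCons x w :=
    ⟨v 0, Fin.tail v, (Fin.cons_self_tail v).symm⟩
  rw [sum_castSucc_lt_eq_sum_zero_add, ceDifferential_apply_vecCons, sub_eq_add_neg]
  congr 1
  · simp [lieDerivative_apply, tail_removeNth_succ_vecCons, pow_succ]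
  · cases k with
    | zero => simp [ceDifferential_zero_form]
    | succ k =>
      rw [ceDifferential_apply (α.curryLeft x) w]
      simp_rw [← Finset.sum_neg_distrib]
      refine Finset.sum_congr rfl fun j _ => Finset.sum_congr rfl fun i _ => ?_
      split_ifs <;>
        simp_all [removeNth_succ_vecCons, map_vecCons_vecCons_swap α x, pow_succ, pow_add]

theorem ceDiff_ceDiff_eq_zero_general {k : ℕ} (α : L [⋀^Fin k]→ₗ[R] N) :
    ceDifferential (ceDifferential α) = 0 := by
  induction k with
  | zero => rw [ceDifferential_zero_form, map_zero]
  | succ k ih =>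
    refine alternatingMap_ext_curryLeft fun x => ?_
    rw [curryLeft_ceDifferential, curryLeft_ceDifferential, map_sub, ih,
      lieDerivative_ceDifferential, sub_zero, sub_self, curryLeft_zero, LinearMap.zero_apply]

end CartanCalculus

theorem ceDiff_eq_ceDifferential (F : Type*) [Field F] (L : Type*) [LieRing L] [LieAlgebra F L]
    (k : ℕ) (α : L [⋀^Fin k]→ₗ[F] F) : ceDiff F L k α = ceDifferential α := by
  cases k with
  | zero => rfl
  | succ k =>
    ext y
    rw [ceDifferential_apply]
    refine Finset.sum_congr rfl fun j _ => ?_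
    rw [Fin.sum_univ_castSucc, dif_neg (Fin.le_last j).not_gt, add_zero]
    refine Finset.sum_congr rfl fun i _ => ?_
    split_ifs
    · rw [zsmul_eq_mul]
      push_cast
      rfl
    · rfl

/-- For a Lie algebra `L` over a field `F`, the Chevalley–Eilenberg differential
squares to zero on alternating forms: `d (d α) = 0`. -/
theorem ceDiff_ceDiff_eq_zero (F : Type*) [Field F] (L : Type*) [LieRing L]
    [LieAlgebra F L] (k : ℕ) (α : AlternatingMap F L F (Fin k)) :
    ceDiff F L (k + 1) (ceDiff F L k (⇑α)) = 0 := by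
  rw [ceDiff_eq_ceDifferential, ceDiff_eq_ceDifferential, ceDiff_ceDiff_eq_zero_general]
  rfl
end
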